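/- For every ab-polynomial u ∈ ℤ⟨a,b⟩, the Tchebyshev transform satisfies the recursion T(c²·u) = 2c·T(c·u) + (2d − c²)·T(u), where c = a + b and d = ab + ba. -/

import Mathlib

open scoped TensorProduct

noncomputable section

namespace Tcheb

/-! ### The algebra `R⟨a,b⟩` of ab-polynomials -/

/-- Words in the two noncommuting letters `a` (encoded `true`) and `b` (encoded `false`). -/
abbrev ABWord : Type := FreeMonoid Bool

/-- The ring `R⟨a,b⟩` of polynomials in two noncommuting variables `a` and `b`. -/
abbrev AB (R : Type) [CommRing R] : Type := MonoidAlgebra R ABWord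

variable (R : Type) [CommRing R]

/-- The ab-monomial corresponding to a word. -/
def word (l : List Bool) : AB R := MonoidAlgebra.of R ABWord (FreeMonoid.ofList l)

/-- The variable `a`. -/
def av : AB R := word R [true]
/-- The variable `b`. -/
def bv : AB R := word R [false]
/-- `c = a + b`. -/
def cv : AB R := av R + bv R
/-- `d = ab + ba`. -/
def dv : AB R := av R * bv R + bv R * av R
/-- `a - b`. -/
def ev : AB R := av R - bv R

/-- The linear map defined by prescribing values on the basis of ab-monomials. -/
def onBasis {M : Type} [AddCommMonoid M] [Module R M] (f : List Bool → M) :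
    AB R →ₗ[R] M :=
  (Finsupp.lift M R ABWord fun w => f (FreeMonoid.toList w)) ∘ₗ
    (MonoidAlgebra.coeffLinearEquiv R).toLinearMap

/-- The algebra map `A` with `A(a) = 1`, `A(b) = 0`. -/
def Amap : AB R →ₐ[R] R :=
  MonoidAlgebra.lift R R ABWord (FreeMonoid.lift fun x => if x then (1 : R) else 0)

/-- The coproduct on `R⟨a,b⟩`: on an ab-monomial `u₁ ⋯ u_k` it is
`Σ_{i=1}^k u₁ ⋯ u_{i-1} ⊗ u_{i+1} ⋯ u_k`. -/
def Delta : AB R →ₗ[R] AB R ⊗[R] AB R :=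
  onBasis R fun w => ∑ i ∈ Finset.range w.length,
    word R (w.take i) ⊗ₜ[R] word R (w.drop (i + 1))

/-- The linear map `C(u) = 2·A(u) + Σ_u A(u₍₁₎)·A(u₍₂₎)`. -/
def Cmap : AB R →ₗ[R] R :=
  2 • (Amap R).toLinearMap +
    (LinearMap.mul' R R ∘ₗ
      TensorProduct.map (Amap R).toLinearMap (Amap R).toLinearMap) ∘ₗ Delta R

/-- `κ(u) = A(u)·(a-b)^(deg u)` on homogeneous `u`, extended linearly. -/
def kappa : AB R →ₗ[R] AB R :=
  onBasis R fun w => Amap R (word R w) • ev R ^ w.length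

/-- `ν(u) = C(u)·(a-b)^(deg u)` on homogeneous `u`, extended linearly. -/
def nuMap : AB R →ₗ[R] AB R :=
  onBasis R fun w => Cmap R (word R w) • ev R ^ w.length

end Tcheb

namespace Tcheb

/-- Cutting a word into the list of segments between the (sorted) cut positions. -/
def segments : List Bool → List ℕ → List (List Bool)
  | l, [] => [l]
  | l, i :: rest => l.take i :: segments (l.drop (i + 1)) (rest.map fun j => j - (i + 1))
  termination_by _ cuts => cuts.length
  decreasing_by simp

variable (R : Type) [CommRing R]

/-- For segments `[s₁, …, s_k]` this is `ν(s₁)·b·ν(s₂)·b ⋯ b·ν(s_{k-1})·b·κ(s_k)`. -/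
def chainProd : List (List Bool) → AB R
  | [] => 1
  | [s] => kappa R (word R s)
  | s :: rest => nuMap R (word R s) * bv R * chainProd rest

/-- The Tchebyshev transform (of the first kind) on ab-polynomials:
`T(u) = Σ_{k ≥ 1} Σ_u ν(u₍₁₎)·b·ν(u₍₂₎)·b ⋯ b·ν(u₍ₖ₋₁₎)·b·κ(u₍ₖ₎)`,
where the inner sum is over the `k`-fold coproduct.  On the ab-monomial basis this
is the sum, over all sets of positions of deleted letters, of the corresponding
products over the resulting segments. -/
def Tmap : AB R →ₗ[R] AB R :=
  onBasis R fun w => ∑ S : Finset (Fin w.length),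
    chainProd R (segments w ((S.sort (· ≤ ·)).map Fin.val))

/-- The `ω` map on a word: replace each occurrence of `ab` by `2d` and all
remaining letters by `c`. -/
def omegaWord : List Bool → AB R
  | [] => 1
  | true :: false :: rest => (2 * dv R) * omegaWord rest
  | _ :: rest => cv R * omegaWord rest

/-- The `ω` map of Billera–Ehrenborg–Readdy. -/
def omegaMap : AB R →ₗ[R] AB R := onBasis R fun w => omegaWord R w

/-- The reversal involution `u ↦ u*` of ab-polynomials. -/
def revMap : AB R →ₗ[R] AB R := onBasis R fun w => word R w.reverse

/-- `H*(1) = 0` and `H*(u·a) = H*(u·b) = u`. -/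
def Hstar : AB R →ₗ[R] AB R :=
  onBasis R fun w => if w = [] then 0 else word R w.dropLast

/-- The Tchebyshev transform of the second kind `U(u) = H*(T(u·a))`. -/
def Umap : AB R →ₗ[R] AB R := Hstar R ∘ₗ Tmap R ∘ₗ LinearMap.mulRight R (av R)

/-- `σ(u) = Σ_u κ(u₍₁₎)·b·T(u₍₂₎)`. -/
def sigmaMap : AB R →ₗ[R] AB R :=
  LinearMap.mul' R (AB R) ∘ₗ
    TensorProduct.map (LinearMap.mulRight R (bv R) ∘ₗ kappa R) (Tmap R) ∘ₗ Delta R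

/-! ### Graded posets and the ab-index -/

/-- `rk` is a rank function for a bounded poset: `rk ⊥ = 0` and covers raise rank by one. -/
def IsRankFun (α : Type) [PartialOrder α] [OrderBot α] (rk : α → ℕ) : Prop :=
  rk ⊥ = 0 ∧ ∀ x y : α, x ⋖ y → rk y = rk x + 1

/-- `f` lists the elements of a chain in increasing order with respect to the
strict order relation `lt`. -/
def IsStrictChain {α : Type} (lt : α → α → Prop) {n : ℕ} (f : Fin (n + 1) → α) : Prop :=
  ∀ i j : Fin (n + 1), i < j → lt (f i) (f j)

/-- The weight of a chain `x₀ < x₁ < ⋯ < x_k`: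
`(a-b)^{ρ(x₀,x₁)-1}·b·(a-b)^{ρ(x₁,x₂)-1}·b ⋯ b·(a-b)^{ρ(x_{k-1},x_k)-1}`. -/
def chainWt {α : Type} (rk : α → ℕ) {n : ℕ} (f : Fin (n + 1) → α) : AB R :=
  (List.intersperse (bv R)
    (List.ofFn fun i : Fin n => ev R ^ (rk (f i.succ) - rk (f i.castSucc) - 1))).prod

/-- The ab-index `Ψ` of the graded poset with strict order relation `lt`, rank
function `rk`, minimum `b` and maximum `t`: the sum of the weights of all chains
from `b` to `t`. -/
def PsiRel {α : Type} (lt : α → α → Prop) (rk : α → ℕ) (b t : α) : AB R :=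
  ∑ᶠ (n : ℕ), ∑ᶠ (f : Fin (n + 1) → α)
    (_ : IsStrictChain lt f ∧ f 0 = b ∧ f (Fin.last n) = t), chainWt R rk f

end Tcheb

namespace Tcheb

/-! ### The Tchebyshev transform of a graded poset -/

section TPoset

variable (α : Type) [PartialOrder α] [BoundedOrder α]

/-- The elements `[x,y]` of the Tchebyshev transform: intervals of `P ∪ {-1̂}`,
i.e. pairs `(x,y)` with `x ∈ P ∪ {-1̂}`, `y ∈ P` and `x < y`. -/
def TPel : Type := {p : WithBot α × α // p.1 < (p.2 : WithBot α)}

/-- The underlying set of the Tchebyshev transform `T(P)`: the intervals `[x,y]`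
together with a new maximum element (`none`). -/
def TP : Type := Option (TPel α)

/-- The cover relation of the Tchebyshev transform `T(P)`:
`[x,y] ⋖ [y,w]` and `[x,y] ⋖ [x,w]` whenever `y ⋖ w` in `P`, and `[x,1̂] ⋖ 1̂_{T(P)}`. -/
inductive TPcov : TP α → TP α → Prop
  | up {x : WithBot α} {y w : α} (h1 : x < (y : WithBot α))
      (h2 : (y : WithBot α) < (w : WithBot α)) (hc : y ⋖ w) :
      TPcov (some ⟨(x, y), h1⟩) (some ⟨((y : WithBot α), w), h2⟩)
  | same {x : WithBot α} {y w : α} (h1 : x < (y : WithBot α))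
      (h2 : x < (w : WithBot α)) (hc : y ⋖ w) :
      TPcov (some ⟨(x, y), h1⟩) (some ⟨(x, w), h2⟩)
  | top {x : WithBot α} (h1 : x < ((⊤ : α) : WithBot α)) :
      TPcov (some ⟨(x, (⊤ : α)), h1⟩) none

/-- The strict order relation of `T(P)`, generated by the cover relation. -/
def TPlt : TP α → TP α → Prop := Relation.TransGen (TPcov α)

/-- The order relation of `T(P)`, generated by the cover relation. -/
def TPle : TP α → TP α → Prop := Relation.ReflTransGen (TPcov α)

/-- The minimum element `[-1̂, 0̂]` of `T(P)`. -/
def TPbot : TP α := some ⟨((⊥ : WithBot α), (⊥ : α)), WithBot.bot_lt_coe _⟩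

/-- The maximum element `1̂_{T(P)}` of `T(P)`. -/
def TPtop : TP α := none

/-- The rank function of `T(P)`: `ρ([x,y]) = ρ(y)` and `ρ(1̂_{T(P)}) = ρ(P) + 1`. -/
def TPrk (rk : α → ℕ) : TP α → ℕ
  | some p => rk p.1.2
  | none => rk (⊤ : α) + 1

theorem TPbot_ne_TPtop : TPbot α ≠ TPtop α := by exact Option.some_ne_none _

/-- The map `z : T(P) → P ∪ {2̂}` with `z([x,y]) = y` and `z(1̂_{T(P)}) = 2̂`. -/
def zmap : TP α → WithTop α
  | some p => (p.1.2 : WithTop α)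
  | none => ⊤

/-- The number of elements of the interval `[u,v]` of `P`, for `u, v ∈ P ∪ {2̂}`. -/
def intervalCard (u v : WithTop α) : ℕ :=
  Set.ncard {t : α | u ≤ (t : WithTop α) ∧ (t : WithTop α) ≤ v}

end TPoset

/-! ### The dual diamond product -/

/-- The strict order relation of the dual diamond product
`P ◇* Q = ((P ∖ {1̂}) × (Q ∖ {1̂})) ∪ {1̂}` (with `none` the new maximum), built from
the order relations `leA, ltA` and `leB, ltB` of the two factors. -/
def dsLT {A B : Type} (leA ltA : A → A → Prop) (leB ltB : B → B → Prop) :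
    Option (A × B) → Option (A × B) → Prop
  | some p, some q => (leA p.1 q.1 ∧ leB p.2 q.2) ∧ (ltA p.1 q.1 ∨ ltB p.2 q.2)
  | some _, none => True
  | none, _ => False

/-! ### EL-labelings -/

/-- The list of edge labels along a chain (given as a list of poset elements). -/
def labelsList {α Λ : Type} (lam : α → α → Λ) (l : List α) : List Λ :=
  (l.zip l.tail).map fun p => lam p.1 p.2

/-- `l` is a maximal (saturated) chain of the interval `[x,y]` with respect to the
cover relation `cov`: it runs from `x` to `y` and every step is a cover. -/
def IsMaxChainList {α : Type} (cov : α → α → Prop) (x y : α) (l : List α) : Prop :=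
  l.head? = some x ∧ l.getLast? = some y ∧ l.Chain' cov

/-- An `EL`-labeling of the poset whose cover relation is `cov`, with labels in the
linearly ordered set `(Λ, lle, llt)`: every interval has a unique rising maximal
chain, which moreover is lexicographically least among all maximal chains of the
interval. -/
def IsELLabeling (α Λ : Type) (lle llt : Λ → Λ → Prop)
    (cov : α → α → Prop) (lam : α → α → Λ) : Prop :=
  ∀ x y : α, Relation.ReflTransGen cov x y →
    ∃ l : List α, (IsMaxChainList cov x y l ∧ (labelsList lam l).Chain' lle) ∧
      (∀ l' : List α, IsMaxChainList cov x y l' →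
        (labelsList lam l').Chain' lle → l' = l) ∧
      (∀ l' : List α, IsMaxChainList cov x y l' →
        labelsList lam l = labelsList lam l' ∨
          List.Lex llt (labelsList lam l) (labelsList lam l'))

/-! ### Eulerian posets -/

/-- A graded poset is Eulerian if every nontrivial interval `[x,y]` has the
same number of elements of even rank as of odd rank. -/
def IsEulerian (α : Type) [PartialOrder α] (rk : α → ℕ) : Prop :=
  ∀ x y : α, x < y →
    Set.ncard {z : α | x ≤ z ∧ z ≤ y ∧ Even (rk z)} =
      Set.ncard {z : α | x ≤ z ∧ z ≤ y ∧ ¬ Even (rk z)}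

/-! ### The face lattice of the crosspolytope -/

/-- A face of the `n`-dimensional crosspolytope: a partial sign vector, i.e. the
pair `(S, ε)` of a subset `S ⊆ {1,…,n}` (the set of coordinates where the function
takes a value `some`) together with a sign function `ε` on `S`. -/
def CrossEl (n : ℕ) : Type := Fin n → Option Bool

/-- `(S,ε) ≤ (T,δ)` iff `S ⊆ T` and `δ` restricted to `S` is `ε`. -/
instance (n : ℕ) : PartialOrder (CrossEl n) where
  le f g := ∀ i s, f i = some s → g i = some s
  le_refl f i s h := h
  le_trans f g h fg gh i s hi := gh i s (fg i s hi)
  le_antisymm f g fg gf := by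
    funext i
    cases hf : f i with
    | some s => exact (fg i s hf).symm
    | none =>
      cases hg : g i with
      | some s => exact absurd (gf i s hg) (by simp [hf])
      | none => rfl

/-- The face lattice of the `n`-dimensional crosspolytope: all partial sign
vectors together with a new maximum element. -/
abbrev Cross (n : ℕ) : Type := WithTop (CrossEl n)

/-- The rank function of the face lattice of the crosspolytope:
`ρ(S,ε) = |S|` and the maximum has rank `n + 1`. -/
def crossRk (n : ℕ) : Cross n → ℕ
  | none => n + 1
  | some f => (Finset.univ.filter fun i : Fin n => (f i).isSome).card

/-- The minimal element (the empty face) of the crosspolytope face lattice. -/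
def crossBot (n : ℕ) : Cross n := WithTop.some (fun _ => none)

/-- The maximal element of the crosspolytope face lattice. -/
def crossTop (n : ℕ) : Cross n := ⊤

/-! ### Quasisymmetric functions -/

/-- The monomial quasisymmetric function `M_{(p₁,…,p_k)}`, as a formal power
series in the countably many commuting variables `t₁, t₂, …` (indexed by `ℕ`). -/
def MQ (R : Type) [CommRing R] (ps : List ℕ) : MvPowerSeries ℕ R :=
  fun m => if ((m.support.sort (· ≤ ·)).map fun i => m i) = ps then 1 else 0

/-- The `t`-part of a monomial in the variables `s` (index `none`) and
`t₁, t₂, …` (indices `some i`). -/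
def tpart (m : Option ℕ →₀ ℕ) : ℕ →₀ ℕ :=
  Finsupp.comapDomain some m (Option.some_injective ℕ).injOn

/-- The type B monomial quasisymmetric function `s^p · M_{(p₁,…,p_k)}`, a formal
power series in the variables `s` (index `none`) and `t₁, t₂, …` (indices `some i`). -/
def MB (R : Type) [CommRing R] (p : ℕ) (ps : List ℕ) : MvPowerSeries (Option ℕ) R :=
  fun m => if m none = p ∧
      (((tpart m).support.sort (· ≤ ·)).map fun i => tpart m i) = ps then 1 else 0

/-- The quasisymmetric function `F(P)` of the graded poset with strict order
relation `lt`, rank function `rk`, minimum `b` and maximum `t`: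
`F(P) = Σ_c M_{(ρ(x₀,x₁),…,ρ(x_{k-1},x_k))}` over all chains `c` from `b` to `t`. -/
def FQ (R : Type) [CommRing R] {α : Type} (lt : α → α → Prop) (rk : α → ℕ)
    (b t : α) : MvPowerSeries ℕ R :=
  ∑ᶠ (n : ℕ), ∑ᶠ (f : Fin (n + 1) → α)
    (_ : IsStrictChain lt f ∧ f 0 = b ∧ f (Fin.last n) = t),
    MQ R (List.ofFn fun i : Fin n => rk (f i.succ) - rk (f i.castSucc))

/-- The type B quasisymmetric function `F_B(P) = Σ_{0̂ < x ≤ 1̂} s^{ρ(x)-1}·F([x,1̂])`,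
written as a sum over all chains `0̂ < x₀ < x₁ < ⋯ < x_k = 1̂` of
`s^{ρ(x₀)-1}·M_{(ρ(x₀,x₁),…,ρ(x_{k-1},x_k))}`. -/
def FB (R : Type) [CommRing R] {α : Type} (lt : α → α → Prop) (rk : α → ℕ)
    (b t : α) : MvPowerSeries (Option ℕ) R :=
  ∑ᶠ (n : ℕ), ∑ᶠ (f : Fin (n + 1) → α)
    (_ : IsStrictChain lt f ∧ lt b (f 0) ∧ f (Fin.last n) = t),
    MB R (rk (f 0) - 1) (List.ofFn fun i : Fin n => rk (f i.succ) - rk (f i.castSucc))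

/-! ### Characters and the chain maps -/

/-- A character on `k⟨a,b⟩`: a linear functional which is multiplicative with
respect to Cartesian products of graded posets (of rank at least 1). -/
def IsCharacter (k : Type) [Field k] (G : AB k →ₗ[k] k) : Prop :=
  ∀ (α β : Type) [Fintype α] [Fintype β] [PartialOrder α] [PartialOrder β]
    [BoundedOrder α] [BoundedOrder β], ∀ (rkα : α → ℕ) (rkβ : β → ℕ),
    IsRankFun α rkα → IsRankFun β rkβ → 1 ≤ rkα ⊤ → 1 ≤ rkβ ⊤ →
    G (PsiRel k (· < ·) (fun p : α × β => rkα p.1 + rkβ p.2)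
        ((⊥ : α), (⊥ : β)) ((⊤ : α), (⊤ : β))) =
      G (PsiRel k (· < ·) rkα ⊥ ⊤) * G (PsiRel k (· < ·) rkβ ⊥ ⊤)

/-- The quasisymmetric function image `g̃F(P)` of the chain map of the second kind:
`Σ_c G(Ψ([x₀,x₁])) ⋯ G(Ψ([x_{k-1},x_k])) · M_{(ρ(x₀,x₁),…,ρ(x_{k-1},x_k))}`,
summed over all chains `c = {b = x₀ < ⋯ < x_k = t}`. -/
def gtF (k : Type) [Field k] (G : AB k →ₗ[k] k) {α : Type} (lt : α → α → Prop)
    (rk : α → ℕ) (b t : α) : MvPowerSeries ℕ k :=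
  ∑ᶠ (n : ℕ), ∑ᶠ (f : Fin (n + 1) → α)
    (_ : IsStrictChain lt f ∧ f 0 = b ∧ f (Fin.last n) = t),
    (∏ i : Fin n, G (PsiRel k lt rk (f i.castSucc) (f i.succ))) •
      MQ k (List.ofFn fun i : Fin n => rk (f i.succ) - rk (f i.castSucc))

/-- The type B quasisymmetric function image `gF_B(P) = Σ_{0̂ < x ≤ 1̂}
s^{ρ(x)-1}·g̃F([x,1̂])` of the chain map of the first kind, written as a sum over
all chains `0̂ < x₀ < ⋯ < x_k = 1̂`. -/
def gFB (k : Type) [Field k] (G : AB k →ₗ[k] k) {α : Type} (lt : α → α → Prop)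
    (rk : α → ℕ) (b t : α) : MvPowerSeries (Option ℕ) k :=
  ∑ᶠ (n : ℕ), ∑ᶠ (f : Fin (n + 1) → α)
    (_ : IsStrictChain lt f ∧ lt b (f 0) ∧ f (Fin.last n) = t),
    (∏ i : Fin n, G (PsiRel k lt rk (f i.castSucc) (f i.succ))) •
      MB k (rk (f 0) - 1) (List.ofFn fun i : Fin n => rk (f i.succ) - rk (f i.castSucc))

/-- The space of homogeneous ab-polynomials of degree `n`. -/
def ABhomog (k : Type) [Field k] (n : ℕ) : Submodule k (AB k) :=
  Submodule.span k {x : AB k | ∃ w : List Bool, w.length = n ∧ x = word k w}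

/-!
Write `e = a - b`. Splitting the cuttings of `u` at the first deleted letter gives
`T(u) = κ(u) + Σ ν(u₍₁₎)·b·T(u₍₂₎)`. Since `Δ(x·u) = 1 ⊗ u + Σ x·u₍₁₎ ⊗ u₍₂₎` for a letter `x`,
while `κ(c·u) = e·κ(u)` and `ν(c·u) = e·(ν(u) + 2κ(u))`, this turns into
`T(c·u) = (e + 4b)·T(u) + 2e·σ(u)` and `σ(c·u) = e·σ(u) + 2b·T(u)`.
Eliminating `σ` gives `T(c²·u) = 2(e + 2b)·T(c·u) - e²·T(u)`, where `e + 2b = c` and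
`e² = c² - 2d`.
-/

section PowersetFin

theorem powerset_map {α β : Type*} (f : α ↪ β) (s : Finset α) :
    (s.map f).powerset = s.powerset.map (Finset.mapEmbedding f).toEmbedding := by
  ext t
  simp [Finset.subset_map_iff, eq_comm]

theorem sum_finset_fin_succ {M : Type*} [AddCommMonoid M] {n : ℕ}
    (f : Finset (Fin (n + 1)) → M) :
    ∑ S, f S = ∑ S : Finset (Fin n), f (S.map (Fin.succEmb n)) +
      ∑ S : Finset (Fin n), f (insert 0 (S.map (Fin.succEmb n))) := by
  have h_univ : (Finset.univ : Finset (Fin (n + 1))) =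
      insert 0 (Finset.univ.map (Fin.succEmb n)) := by
    rw [Fin.univ_succ, Finset.cons_eq_insert]
    rfl
  rw [← Finset.powerset_univ, h_univ, Finset.sum_powerset_insert (by simp), powerset_map]
  simp

theorem sort_map_succEmb {n : ℕ} (S : Finset (Fin n)) :
    (S.map (Fin.succEmb n)).sort = S.sort.map Fin.succ :=
  (StrictMonoOn.map_finsetSort (Fin.succEmb n) S (Fin.strictMono_succ.strictMonoOn _)).symm

theorem sort_insert_zero_map_succEmb {n : ℕ} (S : Finset (Fin n)) :
    (insert 0 (S.map (Fin.succEmb n))).sort = 0 :: S.sort.map Fin.succ := by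
  rw [Finset.sort_insert _ (by simp) (by simp), sort_map_succEmb]

end PowersetFin

section Cuttings

theorem segments_ne_nil (w : List Bool) (cuts : List ℕ) : segments w cuts ≠ [] := by
  cases cuts <;> simp [segments]

theorem segments_cons_map_succ (x : Bool) (w : List Bool) (cuts : List ℕ) :
    segments (x :: w) (cuts.map Nat.succ) = (segments w cuts).modifyHead (x :: ·) := by
  cases cuts <;> simp [segments, Function.comp_def]

theorem segments_cons_zero_cons (x : Bool) (w : List Bool) (cuts : List ℕ) :
    segments (x :: w) (0 :: cuts.map Nat.succ) = [] :: segments w cuts := by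
  simp [segments, Function.comp_def]

variable {M : Type*} [AddCommMonoid M]

/-- The sum of `φ` over all ways of cutting the word `w` into segments by deleting letters, one
for each set of deleted positions. It is indexed as in the definition of `Tmap`. -/
def cutSum (φ : List (List Bool) → M) (w : List Bool) : M :=
  ∑ S : Finset (Fin w.length), φ (segments w ((S.sort (· ≤ ·)).map Fin.val))

theorem cutSum_nil (φ : List (List Bool) → M) : cutSum φ [] = φ [[]] := by
  refine (Fintype.sum_subsingleton (ι := Finset (Fin 0)) _ ∅).trans ?_
  rw [Finset.sort_empty, List.map_nil, segments]

theorem cutSum_cons (φ : List (List Bool) → M) (x : Bool) (w : List Bool) :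
    cutSum φ (x :: w) =
      cutSum (fun l => φ (l.modifyHead (x :: ·))) w + cutSum (fun l => φ ([] :: l)) w := by
  have map_val_succ (l : List (Fin w.length)) :
      (l.map Fin.succ).map Fin.val = (l.map Fin.val).map Nat.succ := by
    simp [Function.comp_def]
  refine (sum_finset_fin_succ fun S : Finset (Fin (w.length + 1)) =>
    φ (segments (x :: w) (S.sort.map Fin.val))).trans ?_
  simp only [sort_map_succEmb, sort_insert_zero_map_succEmb, List.map_cons, map_val_succ,
    Fin.val_zero, segments_cons_map_succ, segments_cons_zero_cons]
  rfl

theorem cutSum_eq_uncut_add_sum_first_cut (φ : List (List Bool) → M) (w : List Bool) :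
    cutSum φ w = φ [w] +
      ∑ i ∈ Finset.range w.length, cutSum (fun l => φ (w.take i :: l)) (w.drop (i + 1)) := by
  induction w generalizing φ with
  | nil => simp [cutSum_nil]
  | cons x w ih =>
    rw [cutSum_cons, ih, List.length_cons, Finset.sum_range_succ', add_assoc]
    rfl

end Cuttings

section Transform

variable {R : Type} [CommRing R]

section Words

theorem word_nil : word R [] = 1 := map_one _

theorem word_cons (x : Bool) (w : List Bool) : word R (x :: w) = word R [x] * word R w :=
  map_mul (MonoidAlgebra.of R ABWord) (FreeMonoid.of x) (FreeMonoid.ofList w)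

variable {M : Type} [AddCommMonoid M] [Module R M]

theorem onBasis_word (f : List Bool → M) (w : List Bool) : onBasis R f (word R w) = f w := by
  simp [onBasis, word, MonoidAlgebra.coeffLinearEquiv]

theorem linearMap_ext_word {f g : AB R →ₗ[R] M} (h : ∀ w, f (word R w) = g (word R w)) :
    f = g := by
  ext w
  exact h w.toList

end Words

section Letters

open LinearMap

theorem Amap_av : Amap R (av R) = 1 := by simp [Amap, av, word]

theorem Amap_bv : Amap R (bv R) = 0 := by simp [Amap, bv, word]

theorem Delta_one : Delta R 1 = 0 := by
  rw [← word_nil, Delta, onBasis_word]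
  rfl

theorem Delta_letter_mul (x : Bool) (u : AB R) :
    Delta R (word R [x] * u) = 1 ⊗ₜ u + (mulLeft R (word R [x])).rTensor (AB R) (Delta R u) := by
  suffices h : Delta R ∘ₗ mulLeft R (word R [x]) =
      TensorProduct.mk R (AB R) (AB R) 1 + (mulLeft R (word R [x])).rTensor (AB R) ∘ₗ Delta R from
    LinearMap.congr_fun h u
  refine linearMap_ext_word fun w => ?_
  simp [← word_cons, Delta, onBasis_word, Finset.sum_range_succ', word_nil, add_comm]

theorem Cmap_one : Cmap R 1 = 2 := by simp [Cmap, Delta_one]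

theorem Cmap_letter_mul (x : Bool) (u : AB R) :
    Cmap R (word R [x] * u) = Amap R (word R [x]) * Cmap R u + Amap R u := by
  have hA : (Amap R).toLinearMap ∘ₗ mulLeft R (word R [x]) =
      Amap R (word R [x]) • (Amap R).toLinearMap := by
    ext; simp
  simp only [Cmap, LinearMap.add_apply, LinearMap.smul_apply, comp_apply,
    AlgHom.toLinearMap_apply, Delta_letter_mul, map_add, map_mul, map_rTensor, hA,
    TensorProduct.map_smul_left, map_smul, TensorProduct.map_tmul, mul'_apply, map_one, smul_eq_mul,
    nsmul_eq_mul]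
  ring

theorem kappa_word (w : List Bool) :
    kappa R (word R w) = Amap R (word R w) • ev R ^ w.length := onBasis_word _ _

theorem nuMap_word (w : List Bool) :
    nuMap R (word R w) = Cmap R (word R w) • ev R ^ w.length := onBasis_word _ _

theorem kappa_one : kappa R 1 = 1 := by
  rw [← word_nil, kappa_word, word_nil, map_one, List.length_nil, pow_zero, one_smul]

theorem nuMap_one : nuMap R 1 = 2 := by
  rw [← word_nil, nuMap_word, word_nil, Cmap_one, List.length_nil, pow_zero, two_smul,
    one_add_one_eq_two]

theorem kappa_comp_mulLeft_letter (x : Bool) :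
    kappa R ∘ₗ mulLeft R (word R [x]) = Amap R (word R [x]) • mulLeft R (ev R) ∘ₗ kappa R := by
  refine linearMap_ext_word fun w => ?_
  have hA : Amap R (word R (x :: w)) = Amap R (word R [x]) * Amap R (word R w) := by
    rw [word_cons, map_mul]
  simp [← word_cons, kappa_word, hA, pow_succ', mul_smul]

theorem nuMap_comp_mulLeft_letter (x : Bool) :
    nuMap R ∘ₗ mulLeft R (word R [x]) =
      mulLeft R (ev R) ∘ₗ (Amap R (word R [x]) • nuMap R + kappa R) := by
  refine linearMap_ext_word fun w => ?_
  have hC : Cmap R (word R (x :: w)) =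
      Amap R (word R [x]) * Cmap R (word R w) + Amap R (word R w) := by
    rw [word_cons, Cmap_letter_mul]
  simp [← word_cons, kappa_word, nuMap_word, hC, pow_succ', mul_smul, add_smul, mul_add]

end Letters

section Convolution

open LinearMap

/-- The convolution `u ↦ Σ_u f(u₍₁₎)·b·g(u₍₂₎)` of two linear maps with respect to the coproduct
and the product `p ⊗ q ↦ p·b·q`. -/
def bConv (f g : AB R →ₗ[R] AB R) : AB R →ₗ[R] AB R :=
  mul' R (AB R) ∘ₗ TensorProduct.map (mulRight R (bv R) ∘ₗ f) g ∘ₗ Delta R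

theorem sigmaMap_eq_bConv : sigmaMap R = bConv (kappa R) (Tmap R) := rfl

theorem bConv_word (f g : AB R →ₗ[R] AB R) (w : List Bool) :
    bConv f g (word R w) = ∑ i ∈ Finset.range w.length,
      f (word R (w.take i)) * bv R * g (word R (w.drop (i + 1))) := by
  simp [bConv, Delta, onBasis_word]

theorem bConv_letter_mul (f g : AB R →ₗ[R] AB R) (x : Bool) (u : AB R) :
    bConv f g (word R [x] * u) = f 1 * bv R * g u + bConv (f ∘ₗ mulLeft R (word R [x])) g u := by
  simp [bConv, Delta_letter_mul, map_rTensor, comp_assoc]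

theorem bConv_add_left (f₁ f₂ g : AB R →ₗ[R] AB R) :
    bConv (f₁ + f₂) g = bConv f₁ g + bConv f₂ g := by
  simp [bConv, comp_add, add_comp, TensorProduct.map_add_left]

theorem bConv_smul_left (r : R) (f g : AB R →ₗ[R] AB R) : bConv (r • f) g = r • bConv f g := by
  simp [bConv, comp_smul, smul_comp, TensorProduct.map_smul_left]

theorem bConv_mulLeft_comp_left (p : AB R) (f g : AB R →ₗ[R] AB R) :
    bConv (mulLeft R p ∘ₗ f) g = mulLeft R p ∘ₗ bConv f g := by
  refine linearMap_ext_word fun w => ?_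
  simp [bConv_word, mul_assoc]

end Convolution

section Recursion

theorem Tmap_word (w : List Bool) : Tmap R (word R w) = cutSum (chainProd R) w := onBasis_word _ _

theorem cutSum_chainProd_cons (s w : List Bool) :
    cutSum (fun l => chainProd R (s :: l)) w =
      nuMap R (word R s) * bv R * Tmap R (word R w) := by
  rw [Tmap_word, cutSum, cutSum, Finset.mul_sum]
  refine Finset.sum_congr rfl fun S _ => ?_
  rw [chainProd]
  exact segments_ne_nil _ _

theorem Tmap_eq_kappa_add_bConv : Tmap R = kappa R + bConv (nuMap R) (Tmap R) := by
  refine linearMap_ext_word fun w => ?_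
  rw [Tmap_word, cutSum_eq_uncut_add_sum_first_cut]
  simp only [LinearMap.add_apply, bConv_word, cutSum_chainProd_cons, chainProd]

theorem sigmaMap_letter_mul (x : Bool) (u : AB R) :
    sigmaMap R (word R [x] * u) =
      Amap R (word R [x]) • (ev R * sigmaMap R u) + bv R * Tmap R u := by
  rw [sigmaMap_eq_bConv, bConv_letter_mul, kappa_comp_mulLeft_letter, bConv_smul_left,
    bConv_mulLeft_comp_left, kappa_one, one_mul, add_comm]
  rfl

theorem Tmap_letter_mul (x : Bool) (u : AB R) :
    Tmap R (word R [x] * u) =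
      Amap R (word R [x]) • (ev R * Tmap R u) + ev R * sigmaMap R u + 2 * bv R * Tmap R u := by
  have hκ : kappa R (word R [x] * u) = Amap R (word R [x]) • (ev R * kappa R u) :=
    LinearMap.congr_fun (kappa_comp_mulLeft_letter x) u
  have hν : bConv (nuMap R) (Tmap R) (word R [x] * u) = 2 * bv R * Tmap R u +
      ev R * (Amap R (word R [x]) • bConv (nuMap R) (Tmap R) u + sigmaMap R u) := by
    rw [bConv_letter_mul, nuMap_one, nuMap_comp_mulLeft_letter, bConv_mulLeft_comp_left,
      bConv_add_left, bConv_smul_left, ← sigmaMap_eq_bConv]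
    rfl
  have hT (v : AB R) : Tmap R v = kappa R v + bConv (nuMap R) (Tmap R) v :=
    LinearMap.congr_fun Tmap_eq_kappa_add_bConv v
  rw [hT (word R [x] * u), hκ, hν, hT u]
  simp only [mul_add, smul_add, mul_smul_comm]
  abel

theorem sigmaMap_cv_mul (u : AB R) :
    sigmaMap R (cv R * u) = ev R * sigmaMap R u + 2 * bv R * Tmap R u := by
  rw [cv, add_mul, map_add, av, bv, sigmaMap_letter_mul, sigmaMap_letter_mul, ← av, ← bv,
    Amap_av, Amap_bv, one_smul, zero_smul]
  noncomm_ring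

theorem Tmap_cv_mul (u : AB R) :
    Tmap R (cv R * u) = (ev R + 4 * bv R) * Tmap R u + 2 * ev R * sigmaMap R u := by
  rw [cv, add_mul, map_add, av, bv, Tmap_letter_mul, Tmap_letter_mul, ← av, ← bv,
    Amap_av, Amap_bv, one_smul, zero_smul]
  noncomm_ring

theorem ev_add_two_mul_bv : ev R + 2 * bv R = cv R := by
  rw [ev, cv]
  noncomm_ring

theorem ev_sq : ev R ^ 2 = cv R ^ 2 - 2 * dv R := by
  rw [ev, cv, dv]
  noncomm_ring

theorem tchebyshev_c_squared_recursion_general (u : AB R) :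
    Tmap R (cv R ^ 2 * u)
      = 2 * cv R * Tmap R (cv R * u) + (2 * dv R - cv R ^ 2) * Tmap R u := by
  have hσ : 2 * ev R * sigmaMap R u = Tmap R (cv R * u) - (ev R + 4 * bv R) * Tmap R u := by
    rw [Tmap_cv_mul, add_sub_cancel_left]
  calc Tmap R (cv R ^ 2 * u)
      = (ev R + 4 * bv R) * Tmap R (cv R * u) + 2 * ev R * sigmaMap R (cv R * u) := by
        rw [pow_two, mul_assoc, Tmap_cv_mul]
    _ = (ev R + 4 * bv R) * Tmap R (cv R * u) + ev R * (2 * ev R * sigmaMap R u)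
          + 4 * (ev R * bv R) * Tmap R u := by
        rw [sigmaMap_cv_mul]; noncomm_ring
    _ = 2 * (ev R + 2 * bv R) * Tmap R (cv R * u) - ev R ^ 2 * Tmap R u := by
        rw [hσ]; noncomm_ring
    _ = 2 * cv R * Tmap R (cv R * u) + (2 * dv R - cv R ^ 2) * Tmap R u := by
        rw [ev_add_two_mul_bv, ev_sq]; noncomm_ring

end Recursion

end Transform

theorem tchebyshev_c_squared_recursion (u : AB ℤ) :
    Tmap ℤ (cv ℤ ^ 2 * u)
      = 2 * cv ℤ * Tmap ℤ (cv ℤ * u) + (2 * dv ℤ - cv ℤ ^ 2) * Tmap ℤ u :=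
  tchebyshev_c_squared_recursion_general u

end Tcheb
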